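/- Let n ≥ 1, c_u ∈ (0,1), C_u ∈ (1,∞), and let U ⊊ ℝⁿ be a (c_u,C_u)-uniform domain. Then there exist constants K₀, K₁ ∈ (1,∞), depending only on n, c_u and C_u, with the following property: for every ξ ∈ ∂U, every r > 0 with K₀r < diam(U), every function u that is positive and harmonic on U ∩ B(ξ, K₀r), continuous on the closure of U ∩ B(ξ, K₀r), and identically 0 on ∂U ∩ B(ξ, K₀r), and every point x_r ∈ U with |x_r − ξ| ≤ r and dist(x_r, ∂U) ≥ c_u·r/8, one has u(y) ≤ K₁·u(x_r) for all y ∈ U ∩ B(ξ, r). -/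

import Mathlib

open Set Metric MeasureTheory ENNReal

noncomputable section

abbrev En (n : ℕ) := EuclideanSpace ℝ (Fin n)

/-- The length of the curve `γ : [0,1] → X`, defined as the supremum of sums
`∑ d(γ(t_i), γ(t_{i-1}))` over partitions `0 ≤ t₀ < … < t_k ≤ 1`. -/
def curveLength {X : Type*} [PseudoEMetricSpace X] (γ : ℝ → X) : ℝ≥0∞ :=
  eVariationOn γ (Set.Icc 0 1)

/-- `γ` is a continuous curve in `Ω` from `x` to `y`. -/
def IsCurveIn {X : Type*} [PseudoEMetricSpace X] (Ω : Set X) (x y : X) (γ : ℝ → X) : Prop :=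
  ContinuousOn γ (Set.Icc 0 1) ∧ Set.MapsTo γ (Set.Icc 0 1) Ω ∧ γ 0 = x ∧ γ 1 = y

/-- The inner (pseudo)metric of `Ω`: the infimum of lengths of continuous curves
joining `x` to `y` inside `Ω`. -/
def innerDist {X : Type*} [PseudoEMetricSpace X] (Ω : Set X) (x y : X) : ℝ≥0∞ :=
  ⨅ (γ : ℝ → X) (_ : IsCurveIn Ω x y γ), curveLength γ

/-- `U` is a `(c,C)`-uniform domain in `ℝⁿ`. -/
def IsUniformDomain {n : ℕ} (c C : ℝ) (U : Set (En n)) : Prop :=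
  IsOpen U ∧ IsConnected U ∧
    ∀ x ∈ U, ∀ y ∈ U, ∃ γ : ℝ → En n, IsCurveIn U x y γ ∧
      curveLength γ ≤ ENNReal.ofReal (C * dist x y) ∧
      ∀ t ∈ Set.Icc (0:ℝ) 1,
        c * min (dist x (γ t)) (dist (γ t) y) ≤ Metric.infDist (γ t) (frontier U)

/-- The Laplacian `∑ ∂²f/∂xᵢ²` of `f : ℝⁿ → ℝ`. -/
def lap {n : ℕ} (f : En n → ℝ) (x : En n) : ℝ :=
  ∑ i : Fin n,
    fderiv ℝ (fun y => fderiv ℝ f y (EuclideanSpace.single i 1)) x (EuclideanSpace.single i 1)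

/-- `f` is harmonic on the open set `V`: twice continuously differentiable with
vanishing Laplacian. -/
def IsHarmonicOn {n : ℕ} (f : En n → ℝ) (V : Set (En n)) : Prop :=
  ContDiffOn ℝ 2 f V ∧ ∀ x ∈ V, lap f x = 0

/-!
A growth lemma for subharmonic functions follows from comparison with a Hopf-type barrier: if
`u ≤ M` near a point `x`, `u = 0` on `∂U`, and `u ≤ m` on a ball at depth comparable to the scale,
then `u x ≤ (1 - θ) M + θ m` with `θ` universal. Points deep in `U` are controlled by Harnack
chains along the uniform curves, which give the power law
`u z ≤ (C r / dist(z, ∂U)) ^ l * u x_r`. Apply both at a maximum point `x` of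
`u x * (2 r - |x - ξ|) ^ l` on `closure U ∩ closedBall ξ (2 r)`, at the scale
`ε (2 r - |x - ξ|)`. By maximality `M` is at most `u x / (1 - ε) ^ l`, so for small `ε` the first
term is absorbed into the left-hand side, while the weight cancels the power in `m`.
-/

/-! ### The mean value property -/

section MeanValue

open Filter Module InnerProductSpace Laplacian Gradient
open scoped RealInnerProductSpace

variable {E : Type*} [NormedAddCommGroup E]

/-- The averaging kernel of the mean value property below. Its square is `C¹` with gradient
`-4 (1 - ‖y‖²)₊ y`, so averages against it are constant along dilations by Green's identity. -/
def paraboloid (y : E) : ℝ := max 0 (1 - ‖y‖ ^ 2)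

theorem continuous_paraboloid : Continuous (paraboloid : E → ℝ) := by
  unfold paraboloid; fun_prop

theorem paraboloid_nonneg (y : E) : 0 ≤ paraboloid y := le_max_left _ _

theorem paraboloid_eq_zero {y : E} (hy : 1 ≤ ‖y‖) : paraboloid y = 0 :=
  max_eq_left (by nlinarith)

theorem hasCompactSupport_paraboloid [ProperSpace E] : HasCompactSupport (paraboloid : E → ℝ) :=
  HasCompactSupport.intro (isCompact_closedBall 0 1) fun y hy ↦
    paraboloid_eq_zero <| by simpa using (not_le.1 <| mem_closedBall_zero_iff.not.1 hy).le

theorem paraboloid_le_two_mul [NormedSpace ℝ E] {a b : E} (hab : ‖b - a‖ ≤ 1) :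
    paraboloid a ≤ 2 * paraboloid ((3 : ℝ)⁻¹ • b) := by
  rcases le_or_gt 1 ‖a‖ with ha | ha
  · rw [paraboloid_eq_zero ha]
    exact mul_nonneg zero_le_two (paraboloid_nonneg _)
  · have hb : ‖b‖ ≤ 2 := by linarith [norm_sub_norm_le b a]
    have hb' : ‖(3 : ℝ)⁻¹ • b‖ ≤ 2 / 3 := by
      rw [norm_smul, Real.norm_of_nonneg (by norm_num)]; linarith
    calc paraboloid a ≤ 1 := max_le zero_le_one (by linarith [sq_nonneg ‖a‖])
      _ ≤ 2 * (1 - ‖(3 : ℝ)⁻¹ • b‖ ^ 2) := by nlinarith [norm_nonneg ((3 : ℝ)⁻¹ • b)]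
      _ ≤ 2 * paraboloid ((3 : ℝ)⁻¹ • b) := by gcongr; exact le_max_right _ _

theorem paraboloid_inv_smul_sub_eq_zero [NormedSpace ℝ E] {T : ℝ} {x z : E} (hT : 0 < T)
    (hz : T ≤ dist z x) : paraboloid (T⁻¹ • (z - x)) = 0 := by
  apply paraboloid_eq_zero
  rwa [norm_smul, norm_inv, Real.norm_of_nonneg hT.le, ← dist_eq_norm, le_inv_mul_iff₀ hT, mul_one]

theorem hasDerivAt_sq_max_zero (a : ℝ) : HasDerivAt (fun s ↦ max 0 s ^ 2) (2 * max 0 a) a := by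
  have remainder_le (s : ℝ) : ‖max 0 s ^ 2 - max 0 a ^ 2 - (s - a) • (2 * max 0 a)‖ ≤
      ‖s - a‖ ^ 2 := by
    rw [Real.norm_eq_abs, Real.norm_eq_abs, sq_abs, smul_eq_mul, abs_le]
    rcases max_cases 0 s with ⟨hs, _⟩ | ⟨hs, _⟩ <;>
      rcases max_cases 0 a with ⟨ha, _⟩ | ⟨ha, _⟩ <;> rw [hs, ha] <;> constructor <;> nlinarith
  rw [hasDerivAt_iff_isLittleO]
  exact (Asymptotics.isBigO_of_le _ fun s ↦ by simpa using remainder_le s).trans_isLittleO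
    (Asymptotics.isLittleO_pow_sub_sub a one_lt_two)

variable [InnerProductSpace ℝ E]

theorem hasFDerivAt_paraboloid_sq (y : E) :
    HasFDerivAt (fun z : E ↦ paraboloid z ^ 2) (-(4 * paraboloid y) • innerSL ℝ y) y := by
  have h := (hasDerivAt_sq_max_zero (1 - ‖y‖ ^ 2)).comp_hasFDerivAt y
    ((hasStrictFDerivAt_norm_sq y).hasFDerivAt.const_sub 1)
  refine h.congr_fderiv ?_
  ext z
  simp [paraboloid]
  ring

theorem contDiff_paraboloid_sq : ContDiff ℝ 1 (fun z : E ↦ paraboloid z ^ 2) := by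
  refine contDiff_one_iff_hasFDerivAt.2 ⟨_, ?_, hasFDerivAt_paraboloid_sq⟩
  have := continuous_paraboloid (E := E)
  fun_prop

variable [FiniteDimensional ℝ E]

theorem gradient_paraboloid_sq (y : E) :
    ∇ (fun z : E ↦ paraboloid z ^ 2) y = -(4 * paraboloid y) • y :=
  ext_inner_right ℝ fun z ↦ by
    rw [inner_gradient_left, (hasFDerivAt_paraboloid_sq y).fderiv]
    simp [inner_smul_left]

theorem laplacian_comp_add_smul {u : E → ℝ} (hu : ContDiff ℝ 2 u) (x : E) (t : ℝ) (y : E) :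
    Δ (fun z ↦ u (x + t • z)) y = t ^ 2 * Δ u (x + t • y) := by
  have hux : ContDiff ℝ 2 fun z ↦ u (x + z) := hu.comp (contDiff_const.add contDiff_id)
  simp only [laplacian_eq_iteratedFDeriv_stdOrthonormalBasis, Finset.mul_sum]
  simp [iteratedFDeriv_comp_const_smul (i := 2) t hux, iteratedFDeriv_comp_add_left]

theorem exists_contDiff_hasCompactSupport_eqOn_ball {u : E → ℝ} {x : E} {ρ T : ℝ} (hT : 0 < T)
    (hTρ : T < ρ) (hu : ContDiffOn ℝ 2 u (ball x ρ)) :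
    ∃ v : E → ℝ, ContDiff ℝ 2 v ∧ HasCompactSupport v ∧ EqOn v u (ball x T) := by
  obtain ⟨R, hTR, hRρ⟩ := exists_between hTρ
  let χ : ContDiffBump x := ⟨T, R, hT, hTR⟩
  refine ⟨fun y ↦ χ y * u y, ?_, χ.hasCompactSupport.mul_right, fun y hy ↦ ?_⟩
  · refine (contMDiff_of_tsupport fun y hy ↦ ContDiffAt.contMDiffAt ?_).contDiff
    have hy' : y ∈ ball x ρ :=
      closedBall_subset_ball hRρ (χ.tsupport_eq ▸ tsupport_mul_subset_left hy)
    exact χ.contDiffAt.mul (hu.contDiffAt (isOpen_ball.mem_nhds hy'))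
  · simp [χ.one_of_mem_closedBall (ball_subset_closedBall hy)]

variable [MeasurableSpace E] [BorelSpace E]

theorem integral_paraboloid_pos : 0 < ∫ y : E, paraboloid y :=
  continuous_paraboloid.integral_pos_of_hasCompactSupport_nonneg_nonzero
    hasCompactSupport_paraboloid paraboloid_nonneg (x := 0) (by simp [paraboloid])

theorem integral_mul_laplacian_eq_neg_integral_inner_gradient {f g : E → ℝ}
    (hf : ContDiff ℝ 1 f) (hfc : HasCompactSupport f) (hg : ContDiff ℝ 2 g) :
    ∫ y, f y * Δ g y = -∫ y, ⟪∇ f y, ∇ g y⟫ := by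
  set b := stdOrthonormalBasis ℝ E
  have hg' (i) : ContDiff ℝ 1 fun z ↦ fderiv ℝ g z (b i) :=
    (hg.fderiv_right (m := 1) (by norm_num)).clm_apply contDiff_const
  have hg'' (i) : Continuous fun y ↦ fderiv ℝ (fun z ↦ fderiv ℝ g z (b i)) y (b i) :=
    ((hg' i).continuous_fderiv one_ne_zero).clm_apply continuous_const
  have hf' (i) : Continuous fun y ↦ fderiv ℝ f y (b i) :=
    (hf.continuous_fderiv one_ne_zero).clm_apply continuous_const
  have hf'c (i) : HasCompactSupport fun y ↦ fderiv ℝ f y (b i) := hfc.fderiv_apply ℝ (b i)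
  have int_left (i) :
      Integrable fun y ↦ f y * fderiv ℝ (fun z ↦ fderiv ℝ g z (b i)) y (b i) :=
    (hf.continuous.mul (hg'' i)).integrable_of_hasCompactSupport hfc.mul_right
  have int_right (i) : Integrable fun y ↦ fderiv ℝ f y (b i) * fderiv ℝ g y (b i) :=
    ((hf' i).mul (hg' i).continuous).integrable_of_hasCompactSupport (hf'c i).mul_right
  have by_parts (i) : ∫ y, f y * fderiv ℝ (fun z ↦ fderiv ℝ g z (b i)) y (b i) =
      -∫ y, fderiv ℝ f y (b i) * fderiv ℝ g y (b i) :=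
    integral_mul_fderiv_eq_neg_fderiv_mul_of_integrable (int_right i) (int_left i)
      ((hf.continuous.mul (hg' i).continuous).integrable_of_hasCompactSupport hfc.mul_right)
      (fun y _ ↦ hf.differentiable one_ne_zero y) fun y _ ↦ (hg' i).differentiable one_ne_zero y
  have laplacian_eq (y) : f y * Δ g y =
      ∑ i, f y * fderiv ℝ (fun z ↦ fderiv ℝ g z (b i)) y (b i) := by
    have hgy : DifferentiableAt ℝ (fderiv ℝ g) y :=
      (hg.fderiv_right (m := 1) (by norm_num)).differentiable one_ne_zero y
    simp [laplacian_eq_iteratedFDeriv_orthonormalBasis g b, iteratedFDeriv_two_apply,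
      fderiv_clm_apply hgy, Finset.mul_sum]
  have inner_eq (y) : ⟪∇ f y, ∇ g y⟫ = ∑ i, fderiv ℝ f y (b i) * fderiv ℝ g y (b i) := by
    simp [← b.sum_inner_mul_inner (∇ f y) (∇ g y), inner_gradient_left, inner_gradient_right]
  simp only [laplacian_eq, inner_eq]
  rw [integral_finsetSum _ fun i _ ↦ int_left i, integral_finsetSum _ fun i _ ↦ int_right i,
    ← Finset.sum_neg_distrib]
  exact Finset.sum_congr rfl fun i _ ↦ by_parts i

theorem hasDerivAt_integral_mul_comp_add_smul {k v : E → ℝ} (hk : Continuous k)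
    (hkc : HasCompactSupport k) (hv : ContDiff ℝ 1 v) (hvc : HasCompactSupport v) (x : E) (t : ℝ) :
    HasDerivAt (fun t : ℝ ↦ ∫ y, k y * v (x + t • y))
      (∫ y, k y * fderiv ℝ v (x + t • y) y) t := by
  have hv' : Continuous (fderiv ℝ v) := hv.continuous_fderiv one_ne_zero
  have hvcont := hv.continuous
  obtain ⟨M, hM⟩ := hv'.bounded_above_of_compact_support (hvc.fderiv ℝ)
  refine (hasDerivAt_integral_of_dominated_loc_of_deriv_le (F := fun t y ↦ k y * v (x + t • y))
    (F' := fun t y ↦ k y * fderiv ℝ v (x + t • y) y) (bound := fun y ↦ ‖k y‖ * (M * ‖y‖))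
    univ_mem (.of_forall fun t ↦ ?_) ?_ ?_ (.of_forall fun y t _ ↦ ?_) ?_
    (.of_forall fun y t _ ↦ ?_)).2
  · exact Continuous.aestronglyMeasurable (by fun_prop)
  · exact Continuous.integrable_of_hasCompactSupport (by fun_prop) hkc.mul_right
  · exact Continuous.aestronglyMeasurable (by fun_prop)
  · rw [norm_mul]
    gcongr
    exact (fderiv ℝ v _).le_of_opNorm_le (hM _) y
  · exact Continuous.integrable_of_hasCompactSupport (by fun_prop) hkc.norm.mul_right
  · have affine : HasDerivAt (fun t : ℝ ↦ x + t • y) y t := by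
      simpa using ((hasDerivAt_id t).smul_const y).const_add x
    exact ((hv.differentiable one_ne_zero _).hasFDerivAt.comp_hasDerivAt t affine).const_mul _

theorem integral_paraboloid_mul_fderiv_eq_zero {g : E → ℝ} (hg : ContDiff ℝ 2 g)
    (hΔ : ∀ y ∈ ball (0 : E) 1, Δ g y = 0) : ∫ y, paraboloid y * fderiv ℝ g y y = 0 := by
  have green := integral_mul_laplacian_eq_neg_integral_inner_gradient contDiff_paraboloid_sq
    (hasCompactSupport_paraboloid.comp_left (g := (· ^ 2)) (by simp)) hg
  have lhs_eq (y : E) : paraboloid y ^ 2 * Δ g y = 0 := by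
    rcases lt_or_ge ‖y‖ 1 with hy | hy
    · rw [hΔ y (by simpa using hy), mul_zero]
    · rw [paraboloid_eq_zero hy]; ring
  have rhs_eq (y : E) : ⟪∇ (fun z : E ↦ paraboloid z ^ 2) y, ∇ g y⟫ =
      -4 * (paraboloid y * fderiv ℝ g y y) := by
    rw [gradient_paraboloid_sq, inner_smul_left, inner_gradient_right]
    simp only [conj_trivial]
    ring
  simp only [lhs_eq, rhs_eq, integral_zero, integral_const_mul] at green
  linarith

theorem integral_paraboloid_mul_comp_add_smul {v : E → ℝ} (hv : ContDiff ℝ 2 v)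
    (hvc : HasCompactSupport v) {x : E} {T : ℝ} (hT : 0 < T) (hΔ : ∀ y ∈ ball x T, Δ v y = 0) :
    ∫ y, paraboloid y * v (x + T • y) = v x * ∫ y : E, paraboloid y := by
  have hderiv := hasDerivAt_integral_mul_comp_add_smul continuous_paraboloid
    hasCompactSupport_paraboloid (hv.of_le one_le_two) hvc x
  have deriv_eq_zero {t : ℝ} (ht : t ∈ Ioo 0 T) :
      ∫ y, paraboloid y * fderiv ℝ v (x + t • y) y = 0 := by
    have dilation (y : E) :
        fderiv ℝ (fun z ↦ v (x + t • z)) y y = t * fderiv ℝ v (x + t • y) y := by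
      rw [fderiv_comp_smul (f := fun z ↦ v (x + z)), fderiv_comp_add_left]
      rfl
    have h := integral_paraboloid_mul_fderiv_eq_zero (g := fun y ↦ v (x + t • y)) (by fun_prop)
      fun y hy ↦ by
        rw [laplacian_comp_add_smul hv, hΔ, mul_zero]
        rw [mem_ball_zero_iff] at hy
        rw [mem_ball, dist_self_add_left, norm_smul, Real.norm_of_nonneg ht.1.le]
        nlinarith [ht.1, ht.2]
    simp only [dilation, mul_left_comm _ t, integral_const_mul] at h
    exact (mul_eq_zero.1 h).resolve_left ht.1.ne'
  obtain ⟨t, ht, hslope⟩ := exists_hasDerivAt_eq_slope _ _ hT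
    (fun t _ ↦ (hderiv t).continuousAt.continuousWithinAt) fun t _ ↦ hderiv t
  rw [deriv_eq_zero ht, eq_comm, _root_.div_eq_zero_iff, or_iff_left (by simpa using hT.ne'),
    sub_eq_zero] at hslope
  simpa [mul_comm _ (v x), integral_const_mul] using hslope

theorem integral_paraboloid_mul_of_harmonicOnNhd {u : E → ℝ} {x : E} {ρ T : ℝ}
    (hu : HarmonicOnNhd u (ball x ρ)) (hT : 0 < T) (hTρ : T < ρ) :
    ∫ z, paraboloid (T⁻¹ • (z - x)) * u z =
      T ^ finrank ℝ E * (u x * ∫ y : E, paraboloid y) := by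
  obtain ⟨v, hv, hvc, hvu⟩ := exists_contDiff_hasCompactSupport_eqOn_ball hT hTρ hu.contDiffOn
  have hΔ : ∀ y ∈ ball x T, Δ v y = 0 := fun y hy ↦ by
    rw [(laplacian_congr_nhds <| hvu.eventuallyEq_of_mem (isOpen_ball.mem_nhds hy)).self_of_nhds]
    exact (hu y (ball_subset_ball hTρ.le hy)).2.self_of_nhds
  have integrand_eq (z : E) :
      paraboloid (T⁻¹ • (z - x)) * u z = paraboloid (T⁻¹ • (z - x)) * v z := by
    by_cases hz : z ∈ ball x T
    · rw [hvu hz]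
    · rw [paraboloid_inv_smul_sub_eq_zero hT (not_lt.1 hz), zero_mul, zero_mul]
  calc ∫ z, paraboloid (T⁻¹ • (z - x)) * u z
      = ∫ z, paraboloid (T⁻¹ • z) * v (x + z) := by
        simp only [integrand_eq]
        rw [← integral_add_left_eq_self _ x]
        simp only [add_sub_cancel_left]
    _ = T ^ finrank ℝ E * ∫ y, paraboloid y * v (x + T • y) := by
        have h := Measure.integral_comp_inv_smul_of_nonneg (volume : Measure E)
          (fun y ↦ paraboloid y * v (x + T • y)) hT.le
        simpa [smul_smul, hT.ne'] using h
    _ = T ^ finrank ℝ E * (u x * ∫ y : E, paraboloid y) := by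
        rw [integral_paraboloid_mul_comp_add_smul hv hvc hT hΔ, hvu (mem_ball_self hT)]

theorem integrable_paraboloid_mul {u : E → ℝ} {x : E} {ρ T : ℝ} (hu : ContinuousOn u (ball x ρ))
    (hT : 0 < T) (hTρ : T < ρ) : Integrable fun z ↦ paraboloid (T⁻¹ • (z - x)) * u z := by
  have hk := continuous_paraboloid (E := E)
  refine IntegrableOn.integrable_of_forall_notMem_eq_zero (s := closedBall x T) ?_ fun z hz ↦ ?_
  · exact ContinuousOn.integrableOn_compact (isCompact_closedBall x T)
      ((by fun_prop : ContinuousOn _ _).mul (hu.mono (closedBall_subset_ball hTρ)))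
  · rw [mem_closedBall, not_le] at hz
    rw [paraboloid_inv_smul_sub_eq_zero hT hz.le, zero_mul]

theorem le_of_harmonicOnNhd_ball {E : Type*} [NormedAddCommGroup E] [InnerProductSpace ℝ E]
    [FiniteDimensional ℝ E] {u : E → ℝ} {x y : E} {ρ : ℝ} (hρ : 0 < ρ)
    (hu : HarmonicOnNhd u (ball x ρ)) (hu₀ : ∀ z ∈ ball x ρ, 0 ≤ u z) (hy : dist y x ≤ ρ / 4) :
    u y ≤ 2 * 3 ^ finrank ℝ E * u x := by
  borelize E
  set t := ρ / 4 with ht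
  have ht₀ : 0 < t := by positivity
  have ball_y : ball y (2 * t) ⊆ ball x ρ := ball_subset_ball' (by linarith)
  have kernel_le (z : E) : paraboloid (t⁻¹ • (z - y)) * u z ≤
      2 * (paraboloid ((3 * t)⁻¹ • (z - x)) * u z) := by
    by_cases hz : z ∈ ball x ρ
    · have h : ‖t⁻¹ • (z - x) - t⁻¹ • (z - y)‖ ≤ 1 := by
        rwa [← smul_sub, _root_.sub_sub_sub_cancel_left, norm_smul, norm_inv,
          Real.norm_of_nonneg ht₀.le, ← dist_eq_norm, inv_mul_le_iff₀ ht₀, mul_one]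
      rw [← mul_assoc, mul_inv, ← smul_smul]
      exact mul_le_mul_of_nonneg_right (paraboloid_le_two_mul h) (hu₀ z hz)
    · rw [mem_ball, not_lt] at hz
      rw [paraboloid_inv_smul_sub_eq_zero ht₀ (by linarith [dist_triangle z y x]),
        paraboloid_inv_smul_sub_eq_zero (by positivity) (by linarith)]
      simp
  have average_le := integral_mono
    (integrable_paraboloid_mul (hu.mono ball_y).continuousOn ht₀ (by linarith))
    (.const_mul (integrable_paraboloid_mul (T := 3 * t) hu.continuousOn (by positivity)
      (by linarith)) 2) kernel_le
  rw [integral_const_mul,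
    integral_paraboloid_mul_of_harmonicOnNhd (hu.mono ball_y) ht₀ (by linarith),
    integral_paraboloid_mul_of_harmonicOnNhd (T := 3 * t) hu (by positivity) (by linarith)]
    at average_le
  rw [mul_pow] at average_le
  have hI := mul_pos (pow_pos ht₀ (finrank ℝ E)) (integral_paraboloid_pos (E := E))
  exact le_of_mul_le_mul_right (by linarith) hI

end MeanValue

/-! ### The maximum principle and the growth lemma -/

section MaximumPrinciple

open Filter Module InnerProductSpace Laplacian
open scoped RealInnerProductSpace Topology

theorem deriv_deriv_nonpos_of_isLocalMax {h : ℝ → ℝ} {a : ℝ} (hc : ContinuousAt h a)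
    (hmax : IsLocalMax h a) : deriv (deriv h) a ≤ 0 := by
  by_contra! hpos
  have hmin : IsLocalMin h a := isLocalMin_of_deriv_deriv_pos hpos hmax.deriv_eq_zero hc
  have hconst : h =ᶠ[𝓝 a] fun _ ↦ h a := by
    filter_upwards [hmax, hmin] with t hle hge using le_antisymm hle hge
  simp [hconst.deriv.deriv_eq] at hpos

theorem deriv_deriv_comp_add_smul {E : Type*} [NormedAddCommGroup E] [NormedSpace ℝ E]
    {g : E → ℝ} {p : E} (hg : ContDiffAt ℝ 2 g p) (e : E) :
    deriv (deriv fun t : ℝ ↦ g (p + t • e)) 0 = fderiv ℝ (fderiv ℝ g) p e e := by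
  have line (t : ℝ) : HasDerivAt (fun t : ℝ ↦ p + t • e) e t := by
    simpa using ((hasDerivAt_id t).smul_const e).const_add p
  have line_zero : p + (0 : ℝ) • e = p := by simp
  have tendsto_line : Tendsto (fun t : ℝ ↦ p + t • e) (𝓝 0) (𝓝 p) := by
    simpa using (line 0).continuousAt.tendsto
  have first : deriv (fun t : ℝ ↦ g (p + t • e)) =ᶠ[𝓝 0] fun t ↦ fderiv ℝ g (p + t • e) e := by
    filter_upwards [tendsto_line.eventually (hg.eventually (by simp))] with t ht
    exact ((ht.differentiableAt two_ne_zero).hasFDerivAt.comp_hasDerivAt t (line t)).deriv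
  have hg' : HasFDerivAt (fderiv ℝ g) (fderiv ℝ (fderiv ℝ g) p) (p + (0 : ℝ) • e) := by
    rw [line_zero]
    exact ((hg.fderiv_right (m := 1) le_rfl).differentiableAt one_ne_zero).hasFDerivAt
  have second : HasDerivAt (fun t : ℝ ↦ fderiv ℝ g (p + t • e)) (fderiv ℝ (fderiv ℝ g) p e) 0 :=
    hg'.comp_hasDerivAt 0 (line 0)
  rw [first.deriv_eq]
  exact ((ContinuousLinearMap.apply ℝ ℝ e).hasFDerivAt.comp_hasDerivAt 0 second).deriv

variable {E : Type*} [NormedAddCommGroup E] [InnerProductSpace ℝ E] [FiniteDimensional ℝ E]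

theorem laplacian_nonpos_of_isLocalMax {g : E → ℝ} {p : E} (hg : ContDiffAt ℝ 2 g p)
    (hmax : IsLocalMax g p) : Δ g p ≤ 0 := by
  rw [laplacian_eq_iteratedFDeriv_stdOrthonormalBasis]
  refine Finset.sum_nonpos fun i _ ↦ ?_
  set e := stdOrthonormalBasis ℝ E i
  have hline : ContinuousAt (fun t : ℝ ↦ p + t • e) 0 := by fun_prop
  have hmax' : IsLocalMax g (p + (0 : ℝ) • e) := by simpa using hmax
  have hgc : ContinuousAt g (p + (0 : ℝ) • e) := by simpa using hg.continuousAt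
  calc iteratedFDeriv ℝ 2 g p ![e, e] = deriv (deriv fun t : ℝ ↦ g (p + t • e)) 0 := by
        simp [iteratedFDeriv_two_apply, deriv_deriv_comp_add_smul hg]
    _ ≤ 0 := deriv_deriv_nonpos_of_isLocalMax
        (ContinuousAt.comp (f := fun t : ℝ ↦ p + t • e) hgc hline)
        (IsMaxFilter.comp_tendsto (g := fun t : ℝ ↦ p + t • e) hmax' hline)

theorem le_of_laplacian_pos {g : E → ℝ} {K V : Set E} {M : ℝ} (hK : IsCompact K) (hV : IsOpen V)
    (hVK : V ⊆ K) (hgc : ContinuousOn g K) (hg : ∀ x ∈ V, ContDiffAt ℝ 2 g x)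
    (hΔ : ∀ x ∈ V, 0 < Δ g x) (hM : ∀ x ∈ K \ V, g x ≤ M) : ∀ x ∈ K, g x ≤ M := by
  intro x hx
  obtain ⟨p, hpK, hp⟩ := hK.exists_isMaxOn ⟨x, hx⟩ hgc
  have hpV : p ∉ V := fun hpV ↦ (hΔ p hpV).not_ge <| laplacian_nonpos_of_isLocalMax (hg p hpV) <|
    (hp.on_subset hVK).isLocalMax (hV.mem_nhds hpV)
  exact (hp hx).trans (hM p ⟨hpK, hpV⟩)

theorem laplacian_exp_neg_mul_norm_sub_sq (α : ℝ) (z y : E) :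
    Δ (fun y ↦ Real.exp (-α * ‖y - z‖ ^ 2)) y =
      Real.exp (-α * ‖y - z‖ ^ 2) * (4 * α ^ 2 * ‖y - z‖ ^ 2 - 2 * finrank ℝ E * α) := by
  set f : E → ℝ := fun y ↦ Real.exp (-α * ‖y - z‖ ^ 2)
  have hf (y : E) : HasFDerivAt f (f y • (-(2 * α)) • innerSL ℝ (y - z)) y := by
    have h := ((((hasFDerivAt_id y).sub_const z).norm_sq).const_mul (-α)).exp
    refine h.congr_fderiv ?_
    ext e
    simp [f]
    ring
  have fderiv_f : fderiv ℝ f = fun y ↦ f y • (-(2 * α)) • innerSL ℝ (y - z) :=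
    funext fun y ↦ (hf y).fderiv
  have second (e : E) : fderiv ℝ (fderiv ℝ f) y e e =
      f y * (4 * α ^ 2 * ⟪e, y - z⟫ ^ 2 - 2 * α * ‖e‖ ^ 2) := by
    have hlin : HasFDerivAt (fun y ↦ (-(2 * α)) • innerSL ℝ (y - z)) ((-(2 * α)) • innerSL ℝ) y :=
      ((innerSL ℝ).hasFDerivAt.comp y ((hasFDerivAt_id y).sub_const z)).const_smul (-(2 * α))
    rw [fderiv_f, ((hf y).fun_smul hlin).fderiv]
    change f y * (-(2 * α) * ⟪e, e⟫) + f y * (-(2 * α) * ⟪y - z, e⟫) * (-(2 * α) * ⟪y - z, e⟫) = _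
    rw [real_inner_comm e (y - z), real_inner_self_eq_norm_sq]
    ring
  have basis_sum : ∑ i, ⟪stdOrthonormalBasis ℝ E i, y - z⟫ ^ 2 = ‖y - z‖ ^ 2 := by
    simpa using (stdOrthonormalBasis ℝ E).sum_sq_inner_right (y - z)
  rw [laplacian_eq_iteratedFDeriv_stdOrthonormalBasis]
  change _ = f y * _
  simp only [iteratedFDeriv_two_apply, Matrix.cons_val_zero, Matrix.cons_val_one, second,
    OrthonormalBasis.norm_eq_one, ← Finset.mul_sum, Finset.sum_sub_distrib, basis_sum]
  simp only [one_pow, Finset.sum_const, Finset.card_univ, Fintype.card_fin, nsmul_eq_mul]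
  ring

theorem exists_barrier {κ : ℝ} (hκ : 0 < κ) : ∃ θ ∈ Ioo (0 : ℝ) 1, ∀ (z : E) {s : ℝ}, 0 < s →
    ∃ φ : E → ℝ, ContDiff ℝ 2 φ ∧ (∀ y, φ y ≤ 1) ∧ (∀ y, dist y z = s → φ y = 0) ∧
      (∀ y, dist y z ≤ s / 2 → θ ≤ φ y) ∧ ∀ y, κ * s < dist y z → 0 < Δ φ y := by
  set A : ℝ := (finrank ℝ E + 1) / κ ^ 2
  have hA : 0 < A := by positivity
  refine ⟨Real.exp (-A / 4) - Real.exp (-A), ⟨?_, ?_⟩, fun z s hs ↦ ?_⟩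
  · exact sub_pos.2 (Real.exp_lt_exp.2 (by linarith))
  · have : Real.exp (-A / 4) ≤ 1 := Real.exp_le_one_iff.2 (by linarith)
    linarith [Real.exp_pos (-A)]
  set α := A / s ^ 2
  have hα : 0 < α := by positivity
  have hαs : α * s ^ 2 = A := by simp only [α]; field_simp
  have hsmooth : ContDiff ℝ 2 fun y ↦ Real.exp (-α * ‖y - z‖ ^ 2) :=
    (contDiff_const.mul ((contDiff_id.sub contDiff_const).norm_sq ℝ)).exp
  refine ⟨fun y ↦ Real.exp (-α * ‖y - z‖ ^ 2) - Real.exp (-A), hsmooth.sub contDiff_const,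
    fun y ↦ ?_, fun y hy ↦ ?_, fun y hy ↦ ?_, fun y hy ↦ ?_⟩
  · have : Real.exp (-α * ‖y - z‖ ^ 2) ≤ 1 :=
      Real.exp_le_one_iff.2 (by nlinarith [sq_nonneg ‖y - z‖])
    linarith [Real.exp_pos (-A)]
  · simp only [← dist_eq_norm, hy, ← hαs, neg_mul, sub_self]
  · refine sub_le_sub_right (Real.exp_le_exp.2 ?_) _
    rw [← dist_eq_norm, ← hαs]
    nlinarith [pow_le_pow_left₀ dist_nonneg hy 2]
  · have hκs : (κ * s) ^ 2 < ‖y - z‖ ^ 2 := by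
      rw [← dist_eq_norm]; gcongr
    have hακ : α * (κ * s) ^ 2 = finrank ℝ E + 1 := by
      rw [mul_pow, mul_left_comm, hαs]; simp only [A]; field_simp
    have hn : (finrank ℝ E : ℝ) < α * ‖y - z‖ ^ 2 := by nlinarith
    have hΔ : Δ (fun y ↦ Real.exp (-α * ‖y - z‖ ^ 2) - Real.exp (-A)) y =
        Δ (fun y ↦ Real.exp (-α * ‖y - z‖ ^ 2)) y :=
      (hsmooth.contDiffAt.laplacian_sub contDiffAt_const).trans (by simp [laplacian_const])
    rw [hΔ, laplacian_exp_neg_mul_norm_sub_sq]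
    have : 0 ≤ (finrank ℝ E : ℝ) := by positivity
    exact mul_pos (Real.exp_pos _) (by nlinarith)

theorem exists_growth {κ : ℝ} (hκ : 0 < κ) : ∃ θ ∈ Ioo (0 : ℝ) 1,
    ∀ {U : Set E} {u : E → ℝ} {z : E} {s m M : ℝ}, IsOpen U → 0 < s →
      ContinuousOn u (closure U ∩ closedBall z s) → (∀ y ∈ U ∩ ball z s, ContDiffAt ℝ 2 u y) →
      (∀ y ∈ U ∩ ball z s, 0 ≤ Δ u y) → (∀ y ∈ frontier U ∩ closedBall z s, u y ≤ m) →
      (∀ y ∈ U ∩ closedBall z s, u y ≤ M) → (∀ y ∈ U ∩ closedBall z (κ * s), u y ≤ m) →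
      ∀ x ∈ U, dist x z ≤ s / 2 → u x ≤ (1 - θ) * M + θ * m := by
  obtain ⟨θ, hθ, barrier⟩ := exists_barrier (E := E) hκ
  refine ⟨θ, hθ, fun {U u z s m M} hU hs huc hu hΔ hfr hM hm x hx hxz ↦ ?_⟩
  have hxK : x ∈ closedBall z s := hxz.trans (by linarith)
  rcases le_or_gt M m with hMm | hmM
  · nlinarith [hM x ⟨hx, hxK⟩, hθ.1]
  obtain ⟨φ, hφ, hφ_le, hφ_sphere, hφ_ge, hΔφ⟩ := barrier z hs
  have hgM : u x + (M - m) * φ x ≤ M := by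
    refine le_of_laplacian_pos (K := closure U ∩ closedBall z s)
      (V := (U ∩ ball z s) \ closedBall z (κ * s)) (g := fun y ↦ u y + (M - m) * φ y)
      ((isCompact_closedBall z s).inter_left isClosed_closure)
      ((hU.inter isOpen_ball).sdiff isClosed_closedBall)
      (sdiff_subset.trans (inter_subset_inter subset_closure ball_subset_closedBall))
      (huc.add (continuousOn_const.mul hφ.continuous.continuousOn))
      (fun y hy ↦ (hu y hy.1).add (contDiffAt_const.mul hφ.contDiffAt)) (fun y hy ↦ ?_)
      (fun y hy ↦ ?_) x ⟨subset_closure hx, hxK⟩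
    · obtain ⟨⟨hyU, hys⟩, hyκ⟩ := hy
      have hΔ_add : Δ (u + (M - m) • φ) y = Δ u y + (M - m) * Δ φ y := by
        have hφ' : ContDiffAt ℝ 2 ((M - m) • φ) y := hφ.contDiffAt.const_smul (M - m)
        rw [(hu y ⟨hyU, hys⟩).laplacian_add hφ', laplacian_smul _ hφ.contDiffAt, smul_eq_mul]
      exact hΔ_add ▸ add_pos_of_nonneg_of_pos (hΔ y ⟨hyU, hys⟩)
        (mul_pos (sub_pos.2 hmM) (hΔφ y (not_le.1 hyκ)))
    · obtain ⟨⟨hyU, hys⟩, hyV⟩ := hy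
      have of_le_m (h : u y ≤ m) : u y + (M - m) * φ y ≤ M := by nlinarith [hφ_le y]
      by_cases hy : y ∈ U
      · rcases (mem_closedBall.1 hys).eq_or_lt with hys' | hys'
        · simpa [hφ_sphere y hys'] using hM y ⟨hy, hys⟩
        · exact of_le_m (hm y ⟨hy, by_contra fun h ↦ hyV ⟨⟨hy, hys'⟩, h⟩⟩)
      · exact of_le_m (hfr y ⟨hU.frontier_eq ▸ ⟨hyU, hy⟩, hys⟩)
  nlinarith [hφ_ge x hxz]

end MaximumPrinciple

/-! ### Harnack chains in uniform sets -/

section Curves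

variable {X : Type*} [PseudoMetricSpace X] {γ : ℝ → X} {U : Set X} {x y : X}

theorem exists_dist_eq_of_continuousOn {t₀ t₁ d : ℝ} (hγ : ContinuousOn γ (Icc t₀ t₁))
    (ht : t₀ ≤ t₁) (hd₀ : 0 ≤ d) (hd : d ≤ dist (γ t₀) (γ t₁)) :
    ∃ t ∈ Icc t₀ t₁, dist (γ t₀) (γ t) = d :=
  intermediate_value_Icc ht ((continuous_const.dist continuous_id).comp_continuousOn hγ)
    ⟨by simpa using hd₀, hd⟩

theorem le_pow_mul_of_eVariationOn_lt {f : X → ℝ} {A ε b : ℝ} {N : ℕ} (hA : 1 ≤ A)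
    (hε : 0 ≤ ε) (hfb : 0 ≤ f (γ b)) : ∀ {a : ℝ}, a ≤ b → ContinuousOn γ (Icc a b) →
    (∀ s ∈ Icc a b, ∀ t ∈ Icc a b, dist (γ s) (γ t) ≤ ε → f (γ s) ≤ A * f (γ t)) →
    eVariationOn γ (Icc a b) < N * ENNReal.ofReal ε → f (γ a) ≤ A ^ N * f (γ b) := by
  induction N with
  | zero => simp
  | succ N ih =>
    intro a hab hγ hf hlen
    rcases le_total (dist (γ a) (γ b)) ε with hclose | hfar
    · calc f (γ a) ≤ A * f (γ b) := hf a (left_mem_Icc.2 hab) b (right_mem_Icc.2 hab) hclose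
        _ ≤ A ^ (N + 1) * f (γ b) := by gcongr; exact le_self_pow₀ hA N.succ_ne_zero
    · obtain ⟨t, ht, hat⟩ := exists_dist_eq_of_continuousOn hγ hab hε hfar
      have hsub : Icc t b ⊆ Icc a b := Icc_subset_Icc_left ht.1
      have hsplit : eVariationOn γ (Icc a t) + eVariationOn γ (Icc t b) =
          eVariationOn γ (Icc a b) := by
        simpa using eVariationOn.Icc_add_Icc γ (s := univ) ht.1 ht.2 (mem_univ t)
      have hat' : ENNReal.ofReal ε ≤ eVariationOn γ (Icc a t) := by
        rw [← hat, ← edist_dist]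
        exact eVariationOn.edist_le γ (left_mem_Icc.2 ht.1) (right_mem_Icc.2 ht.1)
      have hlen' : eVariationOn γ (Icc t b) < N * ENNReal.ofReal ε := by
        refine (ENNReal.add_lt_add_iff_left (ENNReal.ofReal_ne_top (r := ε))).1 ?_
        calc ENNReal.ofReal ε + eVariationOn γ (Icc t b) ≤ eVariationOn γ (Icc a b) := by
              rw [← hsplit]; gcongr
          _ < ENNReal.ofReal ε + N * ENNReal.ofReal ε := by
              rwa [Nat.cast_succ, add_mul, one_mul, add_comm] at hlen
      calc f (γ a) ≤ A * f (γ t) := hf a (left_mem_Icc.2 hab) t ht hat.le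
        _ ≤ A * (A ^ N * f (γ b)) := by
            gcongr
            exact ih ht.2 (hγ.mono hsub) (fun s hs t ht ↦ hf s (hsub hs) t (hsub ht)) hlen'
        _ = A ^ (N + 1) * f (γ b) := by ring

theorem dist_le_of_curveLength_le {L : ℝ} (hL : 0 ≤ L) (hlen : curveLength γ ≤ ENNReal.ofReal L)
    {s t : ℝ} (hs : s ∈ Icc (0 : ℝ) 1) (ht : t ∈ Icc (0 : ℝ) 1) : dist (γ s) (γ t) ≤ L := by
  rw [← ENNReal.ofReal_le_ofReal_iff hL, ← edist_dist]
  exact (eVariationOn.edist_le γ hs ht).trans hlen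

/-- The curve condition in the definition of a `(c, C)`-uniform domain, in an arbitrary metric
space; openness and connectedness of `U` are not included. -/
def IsUniformSet (c C : ℝ) (U : Set X) : Prop :=
  ∀ x ∈ U, ∀ y ∈ U, ∃ γ : ℝ → X, IsCurveIn U x y γ ∧
    curveLength γ ≤ ENNReal.ofReal (C * dist x y) ∧
    ∀ t ∈ Icc (0 : ℝ) 1, c * min (dist x (γ t)) (dist (γ t) y) ≤ infDist (γ t) (frontier U)

variable {c C : ℝ}

theorem mul_half_le_infDist_of_cigar {S : Set X} {z : X} {a : ℝ} (hc : 0 ≤ c) (hc₁ : c ≤ 1)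
    (ha : 0 ≤ a) (hx : a ≤ infDist x S) (hy : a ≤ infDist y S)
    (hz : c * min (dist x z) (dist z y) ≤ infDist z S) : c * (a / 2) ≤ infDist z S := by
  rcases lt_or_ge (min (dist x z) (dist z y)) (a / 2) with hmin | hmin
  · have ha₂ : a / 2 ≤ infDist z S := by
      have hxz : infDist x S ≤ infDist z S + dist x z := infDist_le_infDist_add_dist
      have hyz : infDist y S ≤ infDist z S + dist z y := dist_comm y z ▸ infDist_le_infDist_add_dist
      rcases min_lt_iff.1 hmin with h | h <;> linarith
    exact (mul_le_of_le_one_left (by positivity) hc₁).trans ha₂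
  · exact (mul_le_mul_of_nonneg_left hmin hc).trans hz

theorem IsUniformSet.exists_dist_eq (hU : IsUniformSet c C U) (hc : 0 ≤ c) (hx : x ∈ U)
    (hy : y ∈ U) {ρ : ℝ} (hρ : 0 ≤ ρ) (hρxy : 2 * ρ ≤ dist x y) :
    ∃ z ∈ U, dist x z = ρ ∧ c * ρ ≤ infDist z (frontier U) := by
  obtain ⟨γ, ⟨hγ, hγU, rfl, rfl⟩, -, cigar⟩ := hU x hx y hy
  obtain ⟨t, ht, hdist⟩ := exists_dist_eq_of_continuousOn hγ zero_le_one hρ (by linarith)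
  have hmin : ρ ≤ min (dist (γ 0) (γ t)) (dist (γ t) (γ 1)) :=
    le_min hdist.ge (by linarith [dist_triangle (γ 0) (γ t) (γ 1)])
  exact ⟨γ t, hγU ht, hdist, (mul_le_mul_of_nonneg_left hmin hc).trans (cigar t ht)⟩

theorem IsUniformSet.exists_infDist_ge (hU : IsUniformSet c C U) (hc : 0 ≤ c) (hc₁ : c ≤ 1)
    (hx : x ∈ U) (hy : y ∈ U) {ρ : ℝ} (hρ : 0 ≤ ρ) (hρy : 3 * ρ ≤ infDist y (frontier U)) :
    ∃ z ∈ U, dist x z ≤ ρ ∧ c * ρ ≤ infDist z (frontier U) := by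
  rcases le_total (2 * ρ) (dist x y) with hfar | hclose
  · obtain ⟨z, hz, hxz, hzρ⟩ := hU.exists_dist_eq hc hx hy hρ hfar
    exact ⟨z, hz, hxz.le, hzρ⟩
  · have hyx : infDist y (frontier U) ≤ infDist x (frontier U) + dist x y :=
      dist_comm y x ▸ infDist_le_infDist_add_dist
    exact ⟨x, hx, by simpa using hρ, (mul_le_of_le_one_left hρ hc₁).trans (by linarith)⟩

end Curves

section HarnackChains

open Module InnerProductSpace

theorem one_le_two_mul_three_pow (n : ℕ) : (1 : ℝ) ≤ 2 * 3 ^ n := by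
  linarith [one_le_pow₀ (M₀ := ℝ) (by norm_num : (1 : ℝ) ≤ 3) (n := n)]

theorem ball_infDist_frontier_subset {E : Type*} [NormedAddCommGroup E] [NormedSpace ℝ E]
    [FiniteDimensional ℝ E] {U : Set E} {x : E} (hx : x ∈ U) :
    ball x (infDist x (frontier U)) ⊆ U := by
  rcases eq_or_ne U univ with rfl | hU
  · exact subset_univ _
  · obtain ⟨w, hw, hxw⟩ := exists_mem_frontier_infDist_compl_eq_dist hx hU
    exact (ball_subset_ball (hxw ▸ infDist_le_dist_of_mem hw)).trans ball_infDist_compl_subset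

variable {E : Type*} [NormedAddCommGroup E] [InnerProductSpace ℝ E] [FiniteDimensional ℝ E]
  {U : Set E} {u : E → ℝ} {c C : ℝ}

theorem IsUniformSet.le_pow_mul_of_harmonicOnNhd {p q : E} {Λ a R : ℝ} {N : ℕ}
    (hU : IsUniformSet c C U) (hc : 0 < c) (hc₁ : c ≤ 1) (hC : 0 ≤ C) (hN : 8 * C * Λ < N * c)
    (hu : HarmonicOnNhd u (U ∩ ball p R)) (hu₀ : ∀ z ∈ U ∩ ball p R, 0 ≤ u z) (ha : 0 < a)
    (hp : p ∈ U) (hq : q ∈ U) (hap : a ≤ infDist p (frontier U))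
    (haq : a ≤ infDist q (frontier U)) (hpq : dist p q ≤ Λ * a) (hR : C * dist p q + a ≤ R) :
    u p ≤ (2 * 3 ^ finrank ℝ E) ^ N * u q := by
  obtain ⟨γ, ⟨hγ, hγU, rfl, rfl⟩, hlen, cigar⟩ := hU p hp q hq
  have hL : 0 ≤ C * dist (γ 0) (γ 1) := by positivity
  have ball_subset {t : ℝ} (ht : t ∈ Icc (0 : ℝ) 1) :
      ball (γ t) (c * (a / 2)) ⊆ U ∩ ball (γ 0) R := by
    have hdepth := mul_half_le_infDist_of_cigar hc.le hc₁ ha.le hap haq (cigar t ht)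
    refine subset_inter ((ball_subset_ball hdepth).trans (ball_infDist_frontier_subset (hγU ht)))
      (ball_subset_ball' ?_)
    have := dist_le_of_curveLength_le hL hlen ht (left_mem_Icc.2 zero_le_one)
    nlinarith
  have hlen' : curveLength γ < N * ENNReal.ofReal (c * (a / 2) / 4) := by
    rw [← ENNReal.ofReal_natCast, ← ENNReal.ofReal_mul (by positivity)]
    refine hlen.trans_lt ((ENNReal.ofReal_lt_ofReal_iff_of_nonneg hL).2 ?_)
    calc C * dist (γ 0) (γ 1) ≤ C * (Λ * a) := by gcongr
      _ = 8 * C * Λ * (a / 8) := by ring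
      _ < N * c * (a / 8) := by gcongr
      _ = N * (c * (a / 2) / 4) := by ring
  have hu_end : 0 ≤ u (γ 1) :=
    hu₀ _ (ball_subset (right_mem_Icc.2 zero_le_one) (mem_ball_self (by positivity)))
  refine le_pow_mul_of_eVariationOn_lt (one_le_two_mul_three_pow _) (by positivity) hu_end
    zero_le_one hγ (fun s _ t ht hst ↦ ?_) hlen'
  exact le_of_harmonicOnNhd_ball (by positivity) (hu.mono (ball_subset ht))
    (fun z hz ↦ hu₀ z (ball_subset ht hz)) hst

theorem IsUniformSet.le_pow_mul_of_dist_le_half_pow {x y : E} {b : ℝ} {N : ℕ}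
    (hU : IsUniformSet c C U) (hc : 0 < c) (hc₁ : c ≤ 1) (hC : 0 ≤ C) (hb : 0 < b)
    (hbc : b ≤ c / 2) (hN : 8 * C * (2 / b) < N * c) (hx : x ∈ U) (hy : y ∈ U) (hxy : x ≠ y)
    (hby : b * dist x y ≤ infDist y (frontier U))
    (hu : HarmonicOnNhd u (U ∩ ball x ((2 * C + 2) * dist x y)))
    (hu₀ : ∀ z ∈ U ∩ ball x ((2 * C + 2) * dist x y), 0 ≤ u z) (k : ℕ) :
    ∀ z ∈ U, dist x z ≤ (1 / 2) ^ k * dist x y →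
      b * ((1 / 2) ^ k * dist x y) ≤ infDist z (frontier U) →
      u z ≤ ((2 * 3 ^ finrank ℝ E) ^ N) ^ (k + 1) * u y := by
  set D := dist x y
  have hD : 0 < D := dist_pos.2 hxy
  have scale_le (j : ℕ) : (1 / 2) ^ j * D ≤ D :=
    mul_le_of_le_one_left hD.le (pow_le_one₀ (by norm_num) (by norm_num))
  have harnack {j : ℕ} {p q : E} (hp : p ∈ U) (hq : q ∈ U)
      (hxp : dist x p ≤ (1 / 2) ^ j * D) (hxq : dist x q ≤ (1 / 2) ^ j * D)
      (hbp : b * ((1 / 2) ^ j * D) ≤ infDist p (frontier U))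
      (hbq : b * ((1 / 2) ^ j * D) ≤ infDist q (frontier U)) :
      u p ≤ (2 * 3 ^ finrank ℝ E) ^ N * u q := by
    have hDj := scale_le j
    have hpq : dist p q ≤ 2 * ((1 / 2) ^ j * D) := by linarith [dist_triangle_left p q x]
    have hsub : U ∩ ball p ((2 * C + 1) * D) ⊆ U ∩ ball x ((2 * C + 2) * D) :=
      inter_subset_inter_right _ (ball_subset_ball' (by linarith [dist_comm x p]))
    refine hU.le_pow_mul_of_harmonicOnNhd hc hc₁ hC hN (hu.mono hsub)
      (fun z hz ↦ hu₀ z (hsub hz)) (by positivity) hp hq hbp hbq (hpq.trans_eq (by field_simp)) ?_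
    calc C * dist p q + b * ((1 / 2) ^ j * D) ≤ C * (2 * D) + 1 * D := by
          gcongr <;> linarith
      _ = (2 * C + 1) * D := by ring
  induction k with
  | zero =>
    intro z hz hxz hbz
    simpa using harnack (j := 0) hz hy hxz (by simp [D]) hbz (by simpa using hby)
  | succ k ih =>
    intro z hz hxz hbz
    have halve : (1 / 2 : ℝ) ^ k * D = 2 * ((1 / 2) ^ (k + 1) * D) := by ring
    obtain ⟨w, hw, hxw, hcw⟩ := hU.exists_dist_eq hc.le hx hy (ρ := (1 / 2) ^ (k + 1) * D)
      (by positivity) (by linarith [scale_le k])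
    have hpos : 0 < (1 / 2 : ℝ) ^ (k + 1) * D := by positivity
    calc u z ≤ (2 * 3 ^ finrank ℝ E) ^ N * u w :=
          harnack hz hw hxz hxw.le hbz (le_trans (by nlinarith) hcw)
      _ ≤ (2 * 3 ^ finrank ℝ E) ^ N * (((2 * 3 ^ finrank ℝ E) ^ N) ^ (k + 1) * u y) := by
          gcongr
          exact ih w hw (by linarith) (le_trans (by nlinarith) hcw)
      _ = ((2 * 3 ^ finrank ℝ E) ^ N) ^ (k + 1 + 1) * u y := by ring

end HarnackChains

/-! ### The boundary estimate -/

section BoundaryEstimate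

open InnerProductSpace Laplacian

theorem exists_one_sub_le_mul_one_sub_pow {θ η : ℝ} {l : ℕ} (hθ : θ ∈ Ioo (0 : ℝ) 1)
    (hη : η ∈ Ioo (0 : ℝ) 1) :
    ∃ ε ∈ Ioc 0 η, 1 - θ ≤ (1 - θ / 2) * (1 - ε) ^ l := by
  obtain ⟨hθ₀, hθ₁⟩ := hθ
  have hl : (0 : ℝ) < 2 * (l + 1) := by positivity
  refine ⟨min η (θ / (2 * (l + 1))), ⟨lt_min hη.1 (by positivity), min_le_left _ _⟩, ?_⟩
  set ε := min η (θ / (2 * (l + 1)))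
  have hεη : ε ≤ η := min_le_left _ _
  have hεl : ε * (2 * (l + 1)) ≤ θ := (le_div_iff₀ hl).1 (min_le_right _ _)
  have hε : 0 < ε := lt_min hη.1 (by positivity)
  have bernoulli : 1 + (l : ℝ) * (-ε) ≤ (1 + -ε) ^ l := one_add_mul_le_pow (by linarith [hη.2]) l
  calc 1 - θ ≤ (1 - θ / 2) * (1 - θ / 2) := by nlinarith
    _ ≤ (1 - θ / 2) * (1 + l * -ε) := by gcongr <;> linarith
    _ ≤ (1 - θ / 2) * (1 - ε) ^ l := by
      rw [← sub_eq_add_neg 1 ε] at bernoulli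
      gcongr
      linarith

section Absorption

variable {X : Type*} [PseudoMetricSpace X] {K : Set X} {u : X → ℝ} {ξ : X} {l : ℕ}

theorem exists_isMaxOn_weighted {y : X} {ρ : ℝ} (hK : IsCompact K) (hKξ : K ⊆ closedBall ξ ρ)
    (hu : ContinuousOn u K) (hl : l ≠ 0) (hy : y ∈ K) (hyξ : dist y ξ < ρ) (huy : 0 < u y) :
    ∃ x ∈ K, dist x ξ < ρ ∧ 0 < u x ∧ IsMaxOn (fun x ↦ u x * (ρ - dist x ξ) ^ l) K x := by
  obtain ⟨x, hx, hmax⟩ := hK.exists_isMaxOn ⟨y, hy⟩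
    (hu.mul (by fun_prop : ContinuousOn (fun x ↦ (ρ - dist x ξ) ^ l) K))
  have hpos : 0 < u x * (ρ - dist x ξ) ^ l :=
    (mul_pos huy (pow_pos (sub_pos.2 hyξ) l)).trans_le (hmax hy)
  have hd : 0 ≤ ρ - dist x ξ := sub_nonneg.2 (hKξ hx)
  refine ⟨x, hx, ?_, pos_of_mul_pos_left hpos (pow_nonneg hd l), hmax⟩
  exact sub_pos.1 <| hd.lt_of_ne' fun h ↦ by simp [h, hl] at hpos

theorem le_div_one_sub_pow_of_isMaxOn {x q : X} {ε ρ : ℝ}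
    (hmax : IsMaxOn (fun x ↦ u x * (ρ - dist x ξ) ^ l) K x) (hx : dist x ξ < ρ) (hux : 0 < u x)
    (hε : ε < 1) (hq : q ∈ K) (hqx : dist q x ≤ ε * (ρ - dist x ξ)) :
    u q ≤ u x / (1 - ε) ^ l := by
  have hε' : 0 < 1 - ε := sub_pos.2 hε
  have hd : 0 < ρ - dist x ξ := sub_pos.2 hx
  rcases le_or_gt (u q) 0 with huq | huq
  · exact huq.trans (by positivity)
  · rw [le_div_iff₀ (by positivity)]
    refine le_of_mul_le_mul_right ?_ (pow_pos hd l)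
    calc u q * (1 - ε) ^ l * (ρ - dist x ξ) ^ l = u q * ((1 - ε) * (ρ - dist x ξ)) ^ l := by
          rw [mul_pow, mul_assoc]
      _ ≤ u q * (ρ - dist q ξ) ^ l := by gcongr; linarith [dist_triangle q x ξ]
      _ ≤ u x * (ρ - dist x ξ) ^ l := hmax hq

theorem le_two_mul_of_growth_of_le_div_pow {r θ ε B : ℝ} (hK : IsCompact K)
    (hKξ : K ⊆ closedBall ξ (2 * r)) (hu : ContinuousOn u K) (hl : l ≠ 0) (hr : 0 < r)
    (hθ : 0 < θ) (hε : ε < 1) (hεθ : 1 - θ ≤ (1 - θ / 2) * (1 - ε) ^ l) (hB : 0 ≤ B)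
    (growth : ∀ x ∈ K, dist x ξ < 2 * r → 0 < u x → ∀ M : ℝ,
      (∀ q ∈ K, dist q x ≤ ε * (2 * r - dist x ξ) → u q ≤ M) →
      u x ≤ (1 - θ) * M + θ * (B * (r / (2 * r - dist x ξ)) ^ l)) :
    ∀ y ∈ K, dist y ξ < r → u y ≤ 2 * B := by
  intro y hy hyξ
  rcases le_or_gt (u y) 0 with huy | huy
  · linarith
  obtain ⟨x, hx, hxξ, hux, hmax⟩ :=
    exists_isMaxOn_weighted hK hKξ hu hl hy (by linarith) huy
  have hd : 0 < 2 * r - dist x ξ := sub_pos.2 hxξ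
  have improved := growth x hx hxξ hux _ fun q hq hqx ↦
    le_div_one_sub_pow_of_isMaxOn hmax hxξ hux hε hq hqx
  have absorb : (1 - θ) * (u x / (1 - ε) ^ l) ≤ (1 - θ / 2) * u x := by
    rw [mul_div_assoc', div_le_iff₀ (pow_pos (sub_pos.2 hε) l)]
    nlinarith
  have hux_le : u x ≤ 2 * (B * (r / (2 * r - dist x ξ)) ^ l) := by
    refine le_of_mul_le_mul_left ?_ hθ
    linarith
  refine le_of_mul_le_mul_right ?_ (pow_pos hr l)
  calc u y * r ^ l ≤ u y * (2 * r - dist y ξ) ^ l := by gcongr; linarith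
    _ ≤ u x * (2 * r - dist x ξ) ^ l := hmax hy
    _ ≤ 2 * (B * (r / (2 * r - dist x ξ)) ^ l) * (2 * r - dist x ξ) ^ l := by gcongr
    _ = 2 * B * r ^ l := by rw [div_pow]; field_simp

end Absorption

variable {E : Type*} [NormedAddCommGroup E] [InnerProductSpace ℝ E] [FiniteDimensional ℝ E]
  {c C : ℝ}

theorem IsUniformSet.exists_le_div_pow_mul {b : ℝ} (hc : 0 < c) (hc₁ : c ≤ 1) (hC : 0 ≤ C)
    (hb : 0 < b) (hbc : b ≤ c / 2) :
    ∃ l : ℕ, l ≠ 0 ∧ ∀ {U : Set E} {u : E → ℝ} {x y : E} {ρ t : ℝ}, IsUniformSet c C U →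
      x ∈ U → y ∈ U → dist x y ≤ ρ → b * ρ ≤ infDist y (frontier U) →
      HarmonicOnNhd u (U ∩ ball x ((2 * C + 2) * ρ)) →
      (∀ z ∈ U ∩ ball x ((2 * C + 2) * ρ), 0 ≤ u z) → 0 < t → t ≤ ρ →
      b * t ≤ infDist x (frontier U) → u x ≤ (4 * ρ / t) ^ l * u y := by
  obtain ⟨N, hN⟩ := exists_nat_gt (8 * C * (2 / b) / c)
  rw [div_lt_iff₀ hc] at hN
  set H : ℝ := (2 * 3 ^ Module.finrank ℝ E) ^ N
  obtain ⟨l, hl⟩ := pow_unbounded_of_one_lt H one_lt_two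
  have hl' : H ≤ 2 ^ (l + 1) := hl.le.trans (pow_le_pow_right₀ one_le_two l.le_succ)
  refine ⟨l + 1, l.succ_ne_zero, fun {U u x y ρ t} hU hx hy hxy hby hu hu₀ ht htρ hbt ↦ ?_⟩
  have hρ : 0 < ρ := ht.trans_le htρ
  rcases eq_or_ne x y with rfl | hne
  · refine le_mul_of_one_le_left (hu₀ x ⟨hx, mem_ball_self (by positivity)⟩) (one_le_pow₀ ?_)
    rw [one_le_div ht]
    linarith
  have hsub : U ∩ ball x ((2 * C + 2) * dist x y) ⊆ U ∩ ball x ((2 * C + 2) * ρ) := by gcongr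
  obtain ⟨k, hkt, htk⟩ := exists_nat_pow_near_of_lt_one (x := t / ρ) (y := 1 / 2) (by positivity)
    ((div_le_one hρ).2 htρ) (by norm_num) (by norm_num)
  have two_pow_le : 2 ^ k ≤ ρ / t := by
    rw [one_div, inv_pow] at htk
    simpa using inv_anti₀ (by positivity) htk
  have scale_le : (1 / 2) ^ (k + 1) * dist x y ≤ t :=
    (mul_le_mul_of_nonneg_left hxy (by positivity)).trans ((lt_div_iff₀ hρ).1 hkt).le
  have huy : 0 ≤ u y := hu₀ y ⟨hy, by rw [mem_ball']; nlinarith⟩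
  calc u x ≤ H ^ (k + 1 + 1) * u y :=
        hU.le_pow_mul_of_dist_le_half_pow hc hc₁ hC hb hbc hN hx hy hne (le_trans (by gcongr) hby)
          (hu.mono hsub) (fun z hz ↦ hu₀ z (hsub hz)) (k + 1) x hx (by rw [dist_self]; positivity)
          (le_trans (by gcongr) hbt)
    _ ≤ (2 ^ (l + 1)) ^ (k + 1 + 1) * u y := by gcongr
    _ = (4 * 2 ^ k) ^ (l + 1) * u y := by rw [pow_right_comm]; ring
    _ ≤ (4 * ρ / t) ^ (l + 1) * u y := by
        rw [mul_div_assoc]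
        gcongr

theorem IsUniformSet.exists_interior_growth (hc : 0 < c) (hc₁ : c ≤ 1) :
    ∃ θ ∈ Ioo (0 : ℝ) 1, ∀ {U : Set E} {u : E → ℝ} {x y : E} {ρ m M : ℝ}, IsUniformSet c C U →
      IsOpen U → x ∈ U → y ∈ U → 0 < ρ → 3 / 4 * ρ ≤ infDist y (frontier U) →
      ContinuousOn u (closure U ∩ closedBall x ρ) → HarmonicOnNhd u (U ∩ ball x ρ) →
      (∀ q ∈ frontier U ∩ closedBall x ρ, u q ≤ m) → (∀ q ∈ U ∩ closedBall x ρ, u q ≤ M) →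
      (∀ q ∈ U ∩ closedBall x ρ, c * ρ / 8 ≤ infDist q (frontier U) → u q ≤ m) →
      u x ≤ (1 - θ) * M + θ * m := by
  obtain ⟨θ, hθ, growth⟩ := exists_growth (E := E) (κ := c / 4) (by positivity)
  refine ⟨θ, hθ, fun {U u x y ρ m M} hU hUo hx hy hρ hyρ huc hu hfr hM hm ↦ ?_⟩
  obtain ⟨z, -, hxz, hzc⟩ :=
    hU.exists_infDist_ge hc.le hc₁ hx hy (ρ := ρ / 4) (by positivity) (by linarith)
  have hball : closedBall z (ρ / 2) ⊆ ball x ρ :=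
    closedBall_subset_ball' (by linarith [dist_comm x z])
  have hcball : closedBall z (ρ / 2) ⊆ closedBall x ρ := hball.trans ball_subset_closedBall
  have hoball : ball z (ρ / 2) ⊆ ball x ρ := ball_subset_closedBall.trans hball
  refine growth (s := ρ / 2) hUo (by positivity) (huc.mono (by gcongr))
    (fun q hq ↦ (hu q ⟨hq.1, hoball hq.2⟩).1)
    (fun q hq ↦ (hu q ⟨hq.1, hoball hq.2⟩).2.self_of_nhds.ge)
    (fun q hq ↦ hfr q ⟨hq.1, hcball hq.2⟩) (fun q hq ↦ hM q ⟨hq.1, hcball hq.2⟩)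
    (fun q hq ↦ ?_) x hx (by linarith)
  have hqz : dist z q ≤ c / 4 * (ρ / 2) := dist_comm z q ▸ hq.2
  refine hm q ⟨hq.1, hcball (closedBall_subset_closedBall (by nlinarith) hq.2)⟩ ?_
  linarith [infDist_le_infDist_add_dist (s := frontier U) (x := z) (y := q)]

/-- `u` is a nonnegative harmonic function on `U ∩ B(ξ, R)` with continuous boundary values `0` on
`∂U ∩ B(ξ, R)`; the functions controlled by the boundary estimate. No regularity is required on the
sphere `∂B(ξ, R)`. -/
structure IsHarmonicVanishingOnFrontier (u : E → ℝ) (U : Set E) (ξ : E) (R : ℝ) : Prop where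
  nonneg : ∀ z ∈ U ∩ ball ξ R, 0 ≤ u z
  harmonicOnNhd : HarmonicOnNhd u (U ∩ ball ξ R)
  continuousOn : ContinuousOn u (closure U ∩ ball ξ R)
  eq_zero : ∀ z ∈ frontier U ∩ ball ξ R, u z = 0

theorem IsUniformSet.exists_growth_le_div_pow (hc : 0 < c) (hc₁ : c ≤ 1) (hC : 0 ≤ C) :
    ∃ l : ℕ, l ≠ 0 ∧ ∃ θ ∈ Ioo (0 : ℝ) 1, ∀ {U : Set E} {u : E → ℝ} {ξ x xr : E} {r ρ M : ℝ},
      IsUniformSet c C U → IsOpen U → IsHarmonicVanishingOnFrontier u U ξ ((6 * C + 8) * r) →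
      0 < ρ → ρ ≤ c * r / 6 → closedBall x ρ ⊆ closedBall ξ (2 * r) → x ∈ U → xr ∈ U →
      dist xr ξ ≤ r → c * r / 8 ≤ infDist xr (frontier U) → (∀ q ∈ U ∩ closedBall x ρ, u q ≤ M) →
      u x ≤ (1 - θ) * M + θ * ((4 * r / ρ) ^ l * u xr) := by
  obtain ⟨l, hl, power_law⟩ := IsUniformSet.exists_le_div_pow_mul (E := E) (b := c / 24) hc hc₁ hC
    (by positivity) (by linarith)
  obtain ⟨θ, hθ, growth⟩ := IsUniformSet.exists_interior_growth (E := E) (C := C) hc hc₁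
  refine ⟨l, hl, θ, hθ, fun {U u ξ x xr r ρ M} hU hUo hu hρ hρr hball hx hxr hxrξ hxrc hM ↦ ?_⟩
  have hr : 0 < r := by nlinarith
  have hlt : 2 * r < (6 * C + 8) * r := by nlinarith
  have hball' : closedBall x ρ ⊆ ball ξ ((6 * C + 8) * r) :=
    hball.trans (closedBall_subset_ball hlt)
  have hoball : ball x ρ ⊆ ball ξ ((6 * C + 8) * r) := ball_subset_closedBall.trans hball'
  have huxr : 0 ≤ u xr := hu.nonneg xr ⟨hxr, hxrξ.trans_lt (by linarith)⟩
  refine growth hU hUo hx hxr hρ (by linarith) (hu.continuousOn.mono (by gcongr))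
    (hu.harmonicOnNhd.mono (by gcongr))
    (fun q hq ↦ (hu.eq_zero q ⟨hq.1, hball' hq.2⟩).trans_le (by positivity)) hM fun q hq hqc ↦ ?_
  have hqξ : dist q ξ ≤ 2 * r := hball hq.2
  have hsub : U ∩ ball q ((2 * C + 2) * (3 * r)) ⊆ U ∩ ball ξ ((6 * C + 8) * r) :=
    inter_subset_inter_right _ (ball_subset_ball' (by linarith))
  calc u q ≤ (4 * (3 * r) / (3 * ρ)) ^ l * u xr :=
        power_law hU hq.1 hxr (by linarith [dist_triangle_right q xr ξ]) (by linarith)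
          (hu.harmonicOnNhd.mono hsub) (fun z hz ↦ hu.nonneg z (hsub hz)) (by positivity)
          (by nlinarith) (by linarith)
    _ = (4 * r / ρ) ^ l * u xr := by rw [mul_left_comm, mul_div_mul_left _ _ three_ne_zero]

theorem statement1_general (hc : 0 < c) (hc₁ : c ≤ 1) (hC : 0 ≤ C) :
    ∃ K₀ : ℝ, 1 < K₀ ∧ ∃ K₁ : ℝ, 1 < K₁ ∧
      ∀ U : Set E, U ≠ univ → IsOpen U → IsUniformSet c C U → ∀ (ξ : E) (r : ℝ), 0 < r →
        ∀ u : E → ℝ, IsHarmonicVanishingOnFrontier u U ξ (K₀ * r) →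
          ∀ xr ∈ U, dist xr ξ ≤ r → c * r / 8 ≤ infDist xr (frontier U) →
          ∀ y ∈ U ∩ ball ξ r, u y ≤ K₁ * u xr := by
  obtain ⟨l, hl, θ, hθ, growth⟩ := IsUniformSet.exists_growth_le_div_pow (E := E) hc hc₁ hC
  obtain ⟨ε, ⟨hε, hεc⟩, hεθ⟩ := exists_one_sub_le_mul_one_sub_pow (l := l) (η := c / 12) hθ
    ⟨by positivity, by linarith⟩
  have one_le : 1 ≤ (4 / ε) ^ l := one_le_pow₀ ((one_le_div hε).2 (by linarith))
  refine ⟨6 * C + 8, by linarith, 2 * (4 / ε) ^ l, by linarith, ?_⟩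
  intro U _ hUo hU ξ r hr u hu xr hxr hxrξ hxrc y hy
  have hlt : 2 * r < (6 * C + 8) * r := by nlinarith
  have huxr : 0 ≤ u xr := hu.nonneg xr ⟨hxr, hxrξ.trans_lt (by linarith)⟩
  have hK : IsCompact (closure U ∩ closedBall ξ (2 * r)) :=
    (isCompact_closedBall ξ (2 * r)).inter_left isClosed_closure
  have huK : ContinuousOn u (closure U ∩ closedBall ξ (2 * r)) :=
    hu.continuousOn.mono (inter_subset_inter_right _ (closedBall_subset_ball hlt))
  have hyK : y ∈ closure U ∩ closedBall ξ (2 * r) :=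
    ⟨subset_closure hy.1, closedBall_subset_closedBall (by linarith) (ball_subset_closedBall hy.2)⟩
  rw [mul_assoc]
  refine le_two_mul_of_growth_of_le_div_pow hK inter_subset_right huK hl hr hθ.1 (by linarith) hεθ
    (by positivity) (fun x hx hxξ hux M hM ↦ ?_) y hyK hy.2
  have hd : 0 < 2 * r - dist x ξ := sub_pos.2 hxξ
  have hball : closedBall x (ε * (2 * r - dist x ξ)) ⊆ closedBall ξ (2 * r) :=
    closedBall_subset_closedBall' (by nlinarith)
  have hxU : x ∈ U := by_contra fun hxU ↦
    hux.ne' (hu.eq_zero x ⟨hUo.frontier_eq ▸ ⟨hx.1, hxU⟩, hxξ.trans hlt⟩)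
  convert growth hU hUo hu (by positivity) (by nlinarith [dist_nonneg (x := x) (y := ξ)]) hball hxU
    hxr hxrξ hxrc fun q hq ↦ hM q ⟨subset_closure hq.1, hball hq.2⟩ hq.2 using 3
  rw [mul_right_comm, ← mul_pow, div_mul_div_comm]

theorem lap_eq_laplacian {n : ℕ} {u : En n → ℝ} {x : En n} (hu : ContDiffAt ℝ 2 u x) :
    lap u x = Δ u x := by
  have hu' : DifferentiableAt ℝ (fderiv ℝ u) x :=
    (hu.fderiv_right (m := 1) le_rfl).differentiableAt one_ne_zero
  simp [lap, laplacian_eq_iteratedFDeriv_orthonormalBasis u (EuclideanSpace.basisFun (Fin n) ℝ),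
    iteratedFDeriv_two_apply, fderiv_clm_apply hu']

theorem IsHarmonicOn.harmonicOnNhd {n : ℕ} {u : En n → ℝ} {V : Set (En n)} (hu : IsHarmonicOn u V)
    (hV : IsOpen V) : HarmonicOnNhd u V := by
  have contDiffAt {x : En n} (hx : x ∈ V) : ContDiffAt ℝ 2 u x := hu.1.contDiffAt (hV.mem_nhds hx)
  intro x hx
  refine ⟨contDiffAt hx, ?_⟩
  filter_upwards [hV.mem_nhds hx] with z hz
  rw [← lap_eq_laplacian (contDiffAt hz), hu.2 z hz, Pi.zero_apply]

end BoundaryEstimate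

/-- Boundary estimate: a positive harmonic function vanishing on the boundary of a
`(c_u,C_u)`-uniform domain is controlled, on `U ∩ B(ξ,r)`, by its value at any
interior point `x_r` with `|x_r − ξ| ≤ r` and `dist(x_r,∂U) ≥ c_u r/8`. -/
theorem statement1 (n : ℕ) (hn : 1 ≤ n) (cu Cu : ℝ)
    (hcu : cu ∈ Set.Ioo (0:ℝ) 1) (hCu : 1 < Cu) :
    ∃ K₀ : ℝ, 1 < K₀ ∧ ∃ K₁ : ℝ, 1 < K₁ ∧
      ∀ U : Set (En n), U ≠ Set.univ → IsUniformDomain cu Cu U →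
      ∀ ξ ∈ frontier U, ∀ r : ℝ, 0 < r →
        ENNReal.ofReal (K₀ * r) < EMetric.diam U →
        ∀ u : En n → ℝ,
          (∀ z ∈ U ∩ Metric.ball ξ (K₀ * r), 0 < u z) →
          IsHarmonicOn u (U ∩ Metric.ball ξ (K₀ * r)) →
          ContinuousOn u (closure (U ∩ Metric.ball ξ (K₀ * r))) →
          (∀ z ∈ frontier U ∩ Metric.ball ξ (K₀ * r), u z = 0) →
          ∀ xr ∈ U, dist xr ξ ≤ r → cu * r / 8 ≤ Metric.infDist xr (frontier U) →
          ∀ y ∈ U ∩ Metric.ball ξ r, u y ≤ K₁ * u xr := by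
  obtain ⟨K₀, hK₀, K₁, hK₁, estimate⟩ := statement1_general (E := En n) hcu.1 hcu.2.le (by linarith)
  refine ⟨K₀, hK₀, K₁, hK₁, fun U hU_univ hU ξ _ r hr _ u hpos hharm hcont hzero ↦ ?_⟩
  exact estimate U hU_univ hU.1 hU.2.2 ξ r hr u ⟨fun z hz ↦ (hpos z hz).le,
    hharm.harmonicOnNhd (hU.1.inter isOpen_ball), hcont.mono isOpen_ball.closure_inter, hzero⟩
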